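/- There are no 6-vertex-critical (P6, diamond)-free graphs with clique number 5. -/

import Mathlib

/-!
Let `K = {k 0, …, k 4}` be a 5-clique in a 6-vertex-critical (P₆, diamond)-free graph `G` with
clique number 5. A vertex outside `K` has at most one neighbour in `K`, and more generally at most
one in any maximal clique of `G - K` that does not contain it. The main tool is `Config.no_p4`: an
induced `P₄` in `G - K` that starts at a neighbour of `k i` and then avoids the neighbours of `k i`
extends through `K` to an induced `P₆`. With the absence of clique cutsets it follows
(`Config.dom`) that every vertex outside `K` and outside the neighbourhood of `k i` is within
distance 2 of that neighbourhood.

The heart of the proof is that `G - K` has no triangle (`Config.no_triangle`). Let `T` be a maximal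
clique of `G - K` with at least three vertices. Criticality forces all vertices of `T` but at most
one to have neighbours outside `K ∪ T` (`Config.no_two_free`). The `P₄` condition restricts these
neighbours: first `T` meets at least four of the five neighbourhoods of the `k i`
(`Config.line_hits`), then all five (`Config.line_hits_all`), and in the end no vertex of `T` has a
neighbour outside `K ∪ T` (`Config.line_closed`), a contradiction.

When `G - K` is triangle-free, the neighbours of `k 0` outside `K` induce a matching, and the rest
of `G - K` induces a bipartite graph, again by the `P₄` condition (`Config.bipartite`). An explicit
5-colouring of `G` results (`Config.contradiction`).
-/

open SimpleGraph

/-- The diamond graph: `K₄` minus an edge. -/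
def diamondGraph : SimpleGraph (Fin 4) :=
  SimpleGraph.fromRel (fun a b =>
    (a, b) ∈ [((0 : Fin 4), (1 : Fin 4)), (0, 2), (0, 3), (1, 2), (1, 3)])

/-- `G` has no induced subgraph isomorphic to `H`. -/
def InducedFree {W V : Type*} (H : SimpleGraph W) (G : SimpleGraph V) : Prop :=
  ¬ Nonempty (H ↪g G)

/-- `G` is (P₆, diamond)-free: it contains no induced subgraph isomorphic to the
path on six vertices or to the diamond. -/
def P6DiamondFree {V : Type*} (G : SimpleGraph V) : Prop :=
  InducedFree (SimpleGraph.pathGraph 6) G ∧ InducedFree diamondGraph G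

/-- `G` is `k`-vertex-critical: `χ(G) = k` and every proper induced subgraph has
chromatic number less than `k`. -/
def IsVertexCritical {V : Type*} (k : ℕ) (G : SimpleGraph V) : Prop :=
  G.chromaticNumber = (k : ℕ∞) ∧
    ∀ S : Set V, S ≠ Set.univ → (G.induce S).chromaticNumber < (k : ℕ∞)

namespace SixCritical

/-! ### Setting -/

variable {V : Type*} {G : SimpleGraph V}

/-- The data extracted from a hypothetical counterexample: a 5-clique `k 0, …, k 4` in a
(P₆, diamond, K₆)-free graph that is not 5-colourable although each of its proper induced subgraphs
is. Partial colourings are total functions constrained only on a set `S`. -/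
structure Config (G : SimpleGraph V) (k : Fin 5 → V) : Prop where
  p6 : ∀ a b c d e f : V, G.Adj a b → G.Adj b c → G.Adj c d → G.Adj d e → G.Adj e f →
    ¬ G.Adj a c → ¬ G.Adj a d → ¬ G.Adj a e → ¬ G.Adj a f → ¬ G.Adj b d → ¬ G.Adj b e →
    ¬ G.Adj b f → ¬ G.Adj c e → ¬ G.Adj c f → ¬ G.Adj d f → False
  dia : ∀ a b c d : V, G.Adj a b → G.Adj a c → G.Adj b c → G.Adj a d → G.Adj b d → c ≠ d →
    G.Adj c d
  k6 : ∀ T : Finset V, G.IsClique (T : Set V) → T.card ≤ 5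
  kadj : ∀ i j, i ≠ j → G.Adj (k i) (k j)
  crit : ∀ S : Set V, S ≠ Set.univ →
    ∃ f : V → Fin 5, ∀ u ∈ S, ∀ v ∈ S, G.Adj u v → f u ≠ f v
  ncol : ¬ ∃ f : V → Fin 5, ∀ u v, G.Adj u v → f u ≠ f v

/-- `Out k v`: the vertex `v` lies outside the clique `K = {k 0, …, k 4}`; such vertices are called
outer. -/
def Out (k : Fin 5 → V) (v : V) : Prop := ∀ i, v ≠ k i

/-- A clique `T` of `G - K` such that every vertex outside `K ∪ T` has at most one neighbour in `T`.
In a diamond-free graph, the cliques with at least two vertices that satisfy this are the maximal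
cliques of `G - K` of that size. -/
structure Line (G : SimpleGraph V) (k : Fin 5 → V) (T : Finset V) : Prop where
  adj : ∀ a ∈ T, ∀ b ∈ T, a ≠ b → G.Adj a b
  out : ∀ a ∈ T, Out k a
  uniq : ∀ v, Out k v → v ∉ T → ∀ a ∈ T, ∀ b ∈ T, G.Adj v a → G.Adj v b → a = b

theorem p6_of_free (h : InducedFree (SimpleGraph.pathGraph 6) G) (a b c d e f : V)
    (h1 : G.Adj a b) (h2 : G.Adj b c) (h3 : G.Adj c d) (h4 : G.Adj d e) (h5 : G.Adj e f)
    (n1 : ¬ G.Adj a c) (n2 : ¬ G.Adj a d) (n3 : ¬ G.Adj a e) (n4 : ¬ G.Adj a f)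
    (n5 : ¬ G.Adj b d) (n6 : ¬ G.Adj b e) (n7 : ¬ G.Adj b f) (n8 : ¬ G.Adj c e)
    (n9 : ¬ G.Adj c f) (n10 : ¬ G.Adj d f) : False := by
  have key : ∀ i j : Fin 6, G.Adj (![a, b, c, d, e, f] i) (![a, b, c, d, e, f] j) ↔
      (SimpleGraph.pathGraph 6).Adj i j := by
    intro i j
    rw [SimpleGraph.pathGraph_adj]
    fin_cases i <;> fin_cases j <;> simp <;> grind [G.adj_comm, G.irrefl]
  -- Distinct vertices of `P₆` have distinct neighbourhoods, so the map is injective.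
  have sep : ∀ i j : Fin 6, (∀ l : Fin 6, (i.val + 1 = l.val ∨ l.val + 1 = i.val) ↔
      (j.val + 1 = l.val ∨ l.val + 1 = j.val)) → i = j := by decide
  refine h ⟨⟨⟨![a, b, c, d, e, f], fun i j hij => sep i j fun l => ?_⟩, fun {i j} => key i j⟩⟩
  rw [← SimpleGraph.pathGraph_adj, ← SimpleGraph.pathGraph_adj, ← key, ← key, hij]

theorem dia_of_free (h : InducedFree diamondGraph G) (a b c d : V) (h1 : G.Adj a b)
    (h2 : G.Adj a c) (h3 : G.Adj b c) (h4 : G.Adj a d) (h5 : G.Adj b d) (hne : c ≠ d) :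
    G.Adj c d := by
  by_contra hcd
  have hn := fun x y (h : G.Adj x y) => h.ne
  have hinj : Function.Injective ![a, b, c, d] := by
    intro i j hij
    fin_cases i <;> fin_cases j <;> simp at hij ⊢ <;> grind
  refine h ⟨⟨⟨![a, b, c, d], hinj⟩, fun {i j} => ?_⟩⟩
  simp only [Function.Embedding.coeFn_mk, diamondGraph, SimpleGraph.fromRel_adj]
  fin_cases i <;> fin_cases j <;> simp <;> grind [G.adj_comm, G.irrefl]

namespace Config

/-! ### Neighbourhoods of the clique `K` -/

variable {k : Fin 5 → V}

theorem kinj (h : Config G k) : Function.Injective k := fun i j hij => by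
  by_contra hne
  exact (h.kadj i j hne).ne hij

/-- A 5-clique is maximal, so a vertex off it has at most one neighbour in it. -/
theorem five_uniq (h : Config G k) {T : Finset V}
    (hT : ∀ a ∈ T, ∀ b ∈ T, a ≠ b → G.Adj a b) (hc : T.card = 5) {v : V} (hv : v ∉ T)
    {a b : V} (ha : a ∈ T) (hb : b ∈ T) (hva : G.Adj v a) (hvb : G.Adj v b) : a = b := by
  classical
  by_contra hab
  have hall : ∀ c ∈ T, G.Adj v c := fun c hc' => by
    by_cases h1 : c = a
    · exact h1 ▸ hva
    by_cases h2 : c = b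
    · exact h2 ▸ hvb
    exact h.dia a b v c (hT a ha b hb hab) hva.symm hvb.symm (hT a ha c hc' (Ne.symm h1))
      (hT b hb c hc' (Ne.symm h2)) (fun e => hv (e ▸ hc'))
  have hq := h.k6 (insert v T) (by
    intro x hx y hy hxy
    simp only [Finset.coe_insert, Set.mem_insert_iff, Finset.mem_coe] at hx hy
    rcases hx with rfl | hx <;> rcases hy with rfl | hy
    · exact absurd rfl hxy
    · exact hall y hy
    · exact (hall x hx).symm
    · exact hT x hx y hy hxy)
  rw [Finset.card_insert_of_notMem hv] at hq
  omega

theorem kuniq (h : Config G k) {v : V} (hv : Out k v) {i j : Fin 5} (hi : G.Adj v (k i))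
    (hj : G.Adj v (k j)) : i = j := by
  classical
  apply h.kinj
  refine h.five_uniq (T := Finset.univ.image k) ?_ ?_ (v := v) ?_ ?_ ?_ hi hj
  · intro a ha b hb hab
    simp only [Finset.mem_image, Finset.mem_univ, true_and] at ha hb
    obtain ⟨i, rfl⟩ := ha
    obtain ⟨j, rfl⟩ := hb
    exact h.kadj i j fun e => hab (e ▸ rfl)
  · rw [Finset.card_image_of_injective _ h.kinj]; rfl
  · simp only [Finset.mem_image, Finset.mem_univ, true_and, not_exists]
    exact fun i e => hv i e.symm
  · simp
  · simp

/-- An outer vertex is adjacent to `k m` for at most one index `m`, here called `p`. -/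
theorem exists_index (h : Config G k) {v : V} (hv : Out k v) :
    ∃ p : Fin 5, ∀ m, G.Adj v (k m) → m = p := by
  by_cases hex : ∃ p, G.Adj v (k p)
  · obtain ⟨p, hp⟩ := hex
    exact ⟨p, fun m hm => h.kuniq hv hm hp⟩
  · exact ⟨0, fun m hm => absurd ⟨m, hm⟩ hex⟩

/-- No induced `P₄` in `G - K` starts at a neighbour of `k i` and then avoids the neighbours of
`k i`: three vertices touch at most three of the other `k m`, so prepending `k m - k i` for an
untouched `m` gives an induced `P₆`. -/
theorem no_p4 (h : Config G k) {i : Fin 5} {a b c d : V} (ha : Out k a) (hb : Out k b)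
    (hc : Out k c) (hd : Out k d) (hai : G.Adj a (k i)) (hbi : ¬ G.Adj b (k i))
    (hci : ¬ G.Adj c (k i)) (hdi : ¬ G.Adj d (k i)) (hab : G.Adj a b) (hbc : G.Adj b c)
    (hcd : G.Adj c d) (nac : ¬ G.Adj a c) (nad : ¬ G.Adj a d) (nbd : ¬ G.Adj b d) : False := by
  obtain ⟨p, hp⟩ := h.exists_index hb
  obtain ⟨q, hq⟩ := h.exists_index hc
  obtain ⟨r, hr⟩ := h.exists_index hd
  obtain ⟨m, hm⟩ : ∃ m, m ∉ ({i, p, q, r} : Finset (Fin 5)) := by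
    by_contra hcon
    push Not at hcon
    have h1 : (Finset.univ : Finset (Fin 5)).card ≤ ({i, p, q, r} : Finset (Fin 5)).card :=
      Finset.card_le_card fun x _ => hcon x
    have h2 := Finset.card_le_four (a := i) (b := p) (c := q) (d := r)
    simp only [Finset.card_univ, Fintype.card_fin] at h1
    omega
  simp only [Finset.mem_insert, Finset.mem_singleton, not_or] at hm
  exact h.p6 d c b a (k i) (k m) hcd.symm hbc.symm hab.symm hai (h.kadj i m (Ne.symm hm.1))
    (fun e => nbd e.symm) (fun e => nad e.symm) hdi (fun e => hm.2.2.2 (hr m e))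
    (fun e => nac e.symm) hci (fun e => hm.2.2.1 (hq m e)) hbi (fun e => hm.2.1 (hp m e))
    (fun e => hm.1 (h.kuniq ha e hai))

/-- Every vertex has degree at least 5. -/
theorem deg (h : Config G k) (v : V) (S : Finset V) (hS : ∀ u, G.Adj v u → u ∈ S)
    (hc : S.card ≤ 4) : False := by
  classical
  obtain ⟨f, hf⟩ := h.crit {v}ᶜ (by simp)
  obtain ⟨c, hc⟩ : ∃ c, c ∉ S.image f := by
    by_contra hcon
    push Not at hcon
    have h1 : (Finset.univ : Finset (Fin 5)).card ≤ (S.image f).card :=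
      Finset.card_le_card fun x _ => hcon x
    have h2 := Finset.card_image_le (s := S) (f := f)
    simp only [Finset.card_univ, Fintype.card_fin] at h1
    omega
  simp only [Finset.mem_image, not_exists, not_and] at hc
  refine h.ncol ⟨Function.update f v c, fun x y hxy => ?_⟩
  have hn := hxy.ne
  by_cases hx : x = v
  · subst hx
    rw [Function.update_self, Function.update_of_ne hn.symm]
    exact fun e => hc y (hS y hxy) e.symm
  · by_cases hy : y = v
    · subst hy
      rw [Function.update_self, Function.update_of_ne hn]
      exact hc x (hS x hxy.symm)
    · rw [Function.update_of_ne hx, Function.update_of_ne hy]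
      exact hf x hx y hy hxy

/-- In the degree bound for an outer vertex, its at most one neighbour in `K` can be set aside. -/
theorem deg_out (h : Config G k) {v : V} (hv : Out k v) (S : Finset V)
    (hS : ∀ u, Out k u → G.Adj v u → u ∈ S) (hc : S.card ≤ 3) : False := by
  classical
  obtain ⟨p, hp⟩ := h.exists_index hv
  refine h.deg v (insert (k p) S) (fun u hu => ?_) ((Finset.card_insert_le _ _).trans (by omega))
  by_cases hk : Out k u
  · exact Finset.mem_insert_of_mem (hS u hk hu)
  · obtain ⟨i, rfl⟩ : ∃ i, u = k i := by simpa [Out] using hk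
    rw [hp i hu]
    exact Finset.mem_insert_self _ _

theorem exists_nbr (h : Config G k) (i : Fin 5) : ∃ x, Out k x ∧ G.Adj x (k i) := by
  classical
  by_contra hcon
  push Not at hcon
  refine h.deg (k i) ((Finset.univ.image k).erase (k i)) (fun u hu => ?_) ?_
  · refine Finset.mem_erase.2 ⟨hu.ne', ?_⟩
    by_contra hk
    exact hcon u (fun j e => hk (by simp [e])) hu.symm
  · rw [Finset.card_erase_of_mem (by simp), Finset.card_image_of_injective _ h.kinj]
    simp

/-- No part `R` of `G` is attached to the rest through `K` only: colourings of `G - R` and of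
`R ∪ K` both use all five colours on `K`, so they agree there after permuting colours. -/
theorem no_cut (h : Config G k) (R : Set V) (hne : R.Nonempty) (hout : ∀ v ∈ R, Out k v)
    (hcl : ∀ v ∈ R, ∀ w, Out k w → G.Adj v w → w ∈ R) {x : V} (hx : Out k x) (hxR : x ∉ R) :
    False := by
  classical
  obtain ⟨r, hr⟩ := hne
  obtain ⟨f, hf⟩ := h.crit Rᶜ (fun e => (e ▸ Set.mem_univ r : r ∈ Rᶜ) hr)
  obtain ⟨g, hg⟩ := h.crit {x}ᶜ (by simp)
  have kR : ∀ i, k i ∈ Rᶜ := fun i hi => hout _ hi i rfl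
  have kx : ∀ i, k i ∈ ({x}ᶜ : Set V) := fun i hi => hx i (Set.mem_singleton_iff.1 hi).symm
  have fi : Function.Injective (f ∘ k) := fun i j hij => by
    by_contra hne
    exact hf _ (kR i) _ (kR j) (h.kadj i j hne) hij
  have gi : Function.Injective (g ∘ k) := fun i j hij => by
    by_contra hne
    exact hg _ (kx i) _ (kx j) (h.kadj i j hne) hij
  let ef := Equiv.ofBijective _ (Finite.injective_iff_bijective.1 fi)
  let eg := Equiv.ofBijective _ (Finite.injective_iff_bijective.1 gi)
  have hσ : ∀ i, (eg.symm.trans ef) (g (k i)) = f (k i) := fun i => by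
    have h1 : eg.symm (g (k i)) = i := eg.symm_apply_apply i
    rw [Equiv.trans_apply, h1]; rfl
  have mixed : ∀ u v, u ∈ R → v ∉ R → G.Adj u v → (eg.symm.trans ef) (g u) ≠ f v := by
    intro u v hu hv huv
    have hk : ¬ Out k v := fun ho => hv (hcl u hu v ho huv)
    obtain ⟨i, rfl⟩ : ∃ i, v = k i := by simpa [Out] using hk
    rw [← hσ i]
    exact fun e => hg u (fun e' => hxR (Set.mem_singleton_iff.1 e' ▸ hu)) _ (kx i) huv
      ((eg.symm.trans ef).injective e)
  refine h.ncol ⟨fun v => if v ∈ R then (eg.symm.trans ef) (g v) else f v, fun u v huv => ?_⟩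
  by_cases hu : u ∈ R <;> by_cases hv : v ∈ R <;> simp only [hu, hv, if_true, if_false]
  · exact fun e => hg u (fun e' => hxR (Set.mem_singleton_iff.1 e' ▸ hu)) v
      (fun e' => hxR (Set.mem_singleton_iff.1 e' ▸ hv)) huv ((eg.symm.trans ef).injective e)
  · exact mixed u v hu hv huv
  · exact (mixed v u hv hu huv.symm).symm
  · exact hf u hu v hv huv

/-- Every outer vertex `v` off the neighbourhood of `k i` is within distance 2 of an outer
neighbour `x` of `k i`, along a path that does not meet the neighbourhood of `k i` before `x`.
The vertices for which this fails would be attached to the rest through `K` only. -/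
theorem dom (h : Config G k) {i : Fin 5} {v : V} (hv : Out k v) (hvi : ¬ G.Adj v (k i)) :
    ∃ x, Out k x ∧ G.Adj x (k i) ∧
      (G.Adj v x ∨ ∃ c, Out k c ∧ ¬ G.Adj c (k i) ∧ G.Adj v c ∧ G.Adj c x) := by
  by_contra hcon
  let P : V → Prop := fun v => ∃ x, Out k x ∧ G.Adj x (k i) ∧
      (G.Adj v x ∨ ∃ c, Out k c ∧ ¬ G.Adj c (k i) ∧ G.Adj v c ∧ G.Adj c x)
  obtain ⟨x₀, hx₀, hx₀i⟩ := h.exists_nbr i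
  refine h.no_cut {v | Out k v ∧ ¬ G.Adj v (k i) ∧ ¬ P v} ⟨v, hv, hvi, hcon⟩ (fun v hv => hv.1)
    ?_ hx₀ (fun hx => hx.2.1 hx₀i)
  rintro v ⟨hv, hvi, hP⟩ w hw hvw
  have hwi : ¬ G.Adj w (k i) := fun e => hP ⟨w, hw, e, Or.inl hvw⟩
  refine ⟨hw, hwi, ?_⟩
  rintro ⟨x, hx, hxi, hwx | ⟨c, hc, hci, hwc, hcx⟩⟩
  · exact hP ⟨x, hx, hxi, Or.inr ⟨w, hw, hwi, hvw, hwx⟩⟩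
  · refine h.no_p4 hx hc hw hv hxi hci hwi hvi hcx.symm hwc.symm hvw.symm ?_ ?_ ?_
    · exact fun e => hP ⟨x, hx, hxi, Or.inr ⟨w, hw, hwi, hvw, e.symm⟩⟩
    · exact fun e => hP ⟨x, hx, hxi, Or.inl e.symm⟩
    · exact fun e => hP ⟨x, hx, hxi, Or.inr ⟨c, hc, hci, e.symm, hcx⟩⟩

/-! ### Maximal cliques of `G - K` -/

/-- Every clique of size at least 2 outside `K` extends to a maximal one; `n` bounds the number of
vertices that can still be added. -/
theorem exists_line (h : Config G k) (n : ℕ) (S : Finset V)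
    (hadj : ∀ a ∈ S, ∀ b ∈ S, a ≠ b → G.Adj a b) (hout : ∀ a ∈ S, Out k a) (hc : 2 ≤ S.card)
    (hn : 5 ≤ S.card + n) : ∃ T, S ⊆ T ∧ Line G k T := by
  classical
  induction n generalizing S with
  | zero =>
    have h5 : S.card = 5 := by
      have := h.k6 S (fun a ha b hb hab => hadj a ha b hb hab)
      omega
    exact ⟨S, subset_rfl, hadj, hout, fun v _ hv a ha b hb h1 h2 =>
      h.five_uniq hadj h5 hv ha hb h1 h2⟩
  | succ n ih =>
    by_cases hl : ∀ v, Out k v → v ∉ S → ∀ a ∈ S, ∀ b ∈ S, G.Adj v a → G.Adj v b → a = b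
    · exact ⟨S, subset_rfl, hadj, hout, hl⟩
    push Not at hl
    obtain ⟨v, hv, hvS, a, ha, b, hb, hva, hvb, hab⟩ := hl
    have hall : ∀ c ∈ S, G.Adj v c := fun c hc' => by
      by_cases h1 : c = a
      · exact h1 ▸ hva
      by_cases h2 : c = b
      · exact h2 ▸ hvb
      exact h.dia a b v c (hadj a ha b hb hab) hva.symm hvb.symm (hadj a ha c hc' (Ne.symm h1))
        (hadj b hb c hc' (Ne.symm h2)) (fun e => hvS (e ▸ hc'))
    have hcard := Finset.card_insert_of_notMem hvS
    obtain ⟨T, hT, hl⟩ := ih (insert v S) (by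
        intro x hx y hy hxy
        rcases Finset.mem_insert.1 hx with hxv | hxS <;>
          rcases Finset.mem_insert.1 hy with hyv | hyS
        · exact absurd (hxv.trans hyv.symm) hxy
        · exact hxv ▸ hall y hyS
        · exact hyv ▸ (hall x hxS).symm
        · exact hadj x hxS y hyS hxy)
      (fun a ha => by
        rcases Finset.mem_insert.1 ha with rfl | ha
        · exact hv
        · exact hout a ha) (by omega) (by omega)
    exact ⟨T, (Finset.subset_insert v S).trans hT, hl⟩

theorem exists_line_of_triangle (h : Config G k) {a b c : V} (ha : Out k a) (hb : Out k b)
    (hc : Out k c) (hab : G.Adj a b) (hac : G.Adj a c) (hbc : G.Adj b c) :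
    ∃ T, Line G k T ∧ 3 ≤ T.card ∧ a ∈ T ∧ b ∈ T ∧ c ∈ T := by
  classical
  have h3 : ({a, b, c} : Finset V).card = 3 :=
    Finset.card_eq_three.2 ⟨a, b, c, hab.ne, hac.ne, hbc.ne, rfl⟩
  obtain ⟨T, hT, hl⟩ := h.exists_line 5 {a, b, c} (by
      intro x hx y hy hxy
      simp only [Finset.mem_insert, Finset.mem_singleton] at hx hy
      grind [G.adj_comm])
    (by
      intro x hx
      simp only [Finset.mem_insert, Finset.mem_singleton] at hx
      grind) (by omega) (by omega)
  exact ⟨T, hl, h3 ▸ Finset.card_le_card hT, hT (by simp), hT (by simp), hT (by simp)⟩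

/-- A 5-clique `T` outside `K` cannot have two vertices `s`, `s'` without outer neighbours off `T`:
a 5-colouring `f` of `G - {s, s'}` extends, since `T` leaves two colours for `s` and `s'`, and the
at most one neighbour of each in `K` cannot exclude both ways of distributing them. -/
theorem no_two_free_five (h : Config G k) {T : Finset V} (hT : Line G k T) (h5 : T.card = 5)
    {s s' : V} (hs : s ∈ T) (hs' : s' ∈ T) (hne : s ≠ s')
    (hf : ∀ u, Out k u → G.Adj s u → u ∈ T) (hf' : ∀ u, Out k u → G.Adj s' u → u ∈ T) :
    False := by
  classical
  obtain ⟨f, hcol⟩ := h.crit {s, s'}ᶜ (by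
    intro e
    have : s ∈ ({s, s'}ᶜ : Set V) := e ▸ Set.mem_univ s
    simp at this)
  have hcol' : ∀ u v, u ≠ s → u ≠ s' → v ≠ s → v ≠ s' → G.Adj u v → f u ≠ f v :=
    fun u v h1 h2 h3 h4 => hcol u (by simp [h1, h2]) v (by simp [h3, h4])
  obtain ⟨a, ha, b, hb, hab⟩ : ∃ a ∈ (((T.erase s).erase s').image f)ᶜ,
      ∃ b ∈ (((T.erase s).erase s').image f)ᶜ, a ≠ b := by
    apply Finset.one_lt_card.1
    have h1 : ((T.erase s).erase s').card = 3 := by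
      rw [Finset.card_erase_of_mem (Finset.mem_erase.2 ⟨hne.symm, hs'⟩),
        Finset.card_erase_of_mem hs, h5]
    have h2 := Finset.card_image_le (s := (T.erase s).erase s') (f := f)
    rw [Finset.card_compl, Fintype.card_fin]
    omega
  have hfree : ∀ p, p ∈ (((T.erase s).erase s').image f)ᶜ →
      ∀ u ∈ T, u ≠ s → u ≠ s' → f u ≠ p := by
    intro p hp u hu h1 h2 e
    exact Finset.mem_compl.1 hp (Finset.mem_image.2
      ⟨u, Finset.mem_erase.2 ⟨h2, Finset.mem_erase.2 ⟨h1, hu⟩⟩, e⟩)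
  have ext : ∀ p q, p ≠ q → p ∈ (((T.erase s).erase s').image f)ᶜ →
      q ∈ (((T.erase s).erase s').image f)ᶜ → (∀ i, G.Adj s (k i) → f (k i) ≠ p) →
      (∀ i, G.Adj s' (k i) → f (k i) ≠ q) → False := by
    intro p q hpq hp hq hkp hkq
    have hsp : ∀ u, u ≠ s → u ≠ s' → G.Adj s u → f u ≠ p := by
      intro u h1 h2 hu
      by_cases ho : Out k u
      · exact hfree p hp u (hf u ho hu) h1 h2
      · obtain ⟨i, rfl⟩ : ∃ i, u = k i := by simpa [Out] using ho
        exact hkp i hu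
    have hsq : ∀ u, u ≠ s → u ≠ s' → G.Adj s' u → f u ≠ q := by
      intro u h1 h2 hu
      by_cases ho : Out k u
      · exact hfree q hq u (hf' u ho hu) h1 h2
      · obtain ⟨i, rfl⟩ : ∃ i, u = k i := by simpa [Out] using ho
        exact hkq i hu
    refine h.ncol ⟨fun v => if v = s then p else if v = s' then q else f v, fun u v huv => ?_⟩
    have := huv.ne
    grind [G.adj_comm]
  have hk : ∀ i j, G.Adj s (k i) → G.Adj s' (k j) → f (k i) ≠ f (k j) := by
    intro i j hi hj
    have hkT : k i ∉ T := fun e => hT.out _ e i rfl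
    have hij : i ≠ j := fun e => hne (h.five_uniq hT.adj h5 hkT hs hs' hi.symm (e ▸ hj.symm))
    exact hcol' _ _ (hT.out s hs i).symm (hT.out s' hs' i).symm (hT.out s hs j).symm
      (hT.out s' hs' j).symm (h.kadj i j hij)
  have hs1 : ∀ i j, G.Adj s (k i) → G.Adj s (k j) → f (k i) = f (k j) :=
    fun i j hi hj => by rw [h.kuniq (hT.out s hs) hi hj]
  have hs2 : ∀ i j, G.Adj s' (k i) → G.Adj s' (k j) → f (k i) = f (k j) :=
    fun i j hi hj => by rw [h.kuniq (hT.out s' hs') hi hj]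
  have e1 := ext a b hab ha hb
  have e2 := ext b a hab.symm hb ha
  grind

/-- In a maximal clique of `G - K`, at most one vertex has no outer neighbour off the clique: a
small clique would give a vertex of degree at most 4, and a 5-clique is excluded by recolouring. -/
theorem no_two_free (h : Config G k) {T : Finset V} (hT : Line G k T)
    {s s' : V} (hs : s ∈ T) (hs' : s' ∈ T) (hne : s ≠ s')
    (hf : ∀ u, Out k u → G.Adj s u → u ∈ T) (hf' : ∀ u, Out k u → G.Adj s' u → u ∈ T) :
    False := by
  classical
  have h5 := h.k6 T (fun a ha b hb hab => hT.adj a ha b hb hab)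
  by_cases hc : T.card = 5
  · exact h.no_two_free_five hT hc hs hs' hne hf hf'
  · refine h.deg_out (hT.out s hs) (T.erase s)
      (fun u hu hsu => Finset.mem_erase.2 ⟨hsu.ne', hf u hu hsu⟩) ?_
    rw [Finset.card_erase_of_mem hs]
    omega

/-- Let at least three vertices `c`, `s`, `s'` of `T` lie outside the neighbourhood of `k i`. If an
outer neighbour `x` of `k i` off `T` is adjacent to `c`, then all outer neighbours of `s` lie in `T`
or in the neighbourhood of `k i`: any other one, `u`, would give an induced `P₄` starting at `x`,
namely `x - u - s - s'` or `x - c - s - u`. -/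
theorem pendant (h : Config G k) {T : Finset V} (hT : Line G k T) {i : Fin 5} {x c s s' u : V}
    (hx : Out k x) (hxi : G.Adj x (k i)) (hxT : x ∉ T) (hc : c ∈ T) (hxc : G.Adj x c)
    (hci : ¬ G.Adj c (k i)) (hs : s ∈ T) (hsi : ¬ G.Adj s (k i)) (hsc : s ≠ c) (hs' : s' ∈ T)
    (hsi' : ¬ G.Adj s' (k i)) (hsc' : s' ≠ c) (hss : s ≠ s') (hu : Out k u) (huT : u ∉ T)
    (hui : ¬ G.Adj u (k i)) : ¬ G.Adj s u := by
  intro hsu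
  have nx : ∀ t ∈ T, t ≠ c → ¬ G.Adj x t := fun t ht htc e => htc (hT.uniq x hx hxT t ht c hc e hxc)
  have nu : ∀ t ∈ T, t ≠ s → ¬ G.Adj u t :=
    fun t ht hts e => hts (hT.uniq u hu huT t ht s hs e hsu.symm)
  by_cases hxu : G.Adj x u
  · exact h.no_p4 hx hu (hT.out s hs) (hT.out s' hs') hxi hui hsi hsi' hxu hsu.symm
      (hT.adj s hs s' hs' hss) (nx s hs hsc) (nx s' hs' hsc') (nu s' hs' hss.symm)
  · exact h.no_p4 hx (hT.out c hc) (hT.out s hs) hu hxi hci hsi hui hxc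
      (hT.adj c hc s hs hsc.symm) hsu (nx s hs hsc) hxu (fun e => nu c hc hsc.symm e.symm)

theorem exists_other {T : Finset V} (h3 : 3 ≤ T.card) (a b : V) : ∃ s ∈ T, s ≠ a ∧ s ≠ b := by
  classical
  by_contra hcon
  push Not at hcon
  have h1 : T ⊆ {a, b} := fun s hs => by
    by_cases e : s = a
    · simp [e]
    · simp [hcon s hs e]
  have := (Finset.card_le_card h1).trans Finset.card_le_two
  omega

/-- A maximal clique of `G - K` that avoids the neighbourhood of `k i` is joined to it by an edge. -/
theorem touch (h : Config G k) {T : Finset V} (hT : Line G k T) (h3 : 3 ≤ T.card) {i : Fin 5}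
    (hi : ∀ t ∈ T, ¬ G.Adj t (k i)) :
    ∃ x, Out k x ∧ G.Adj x (k i) ∧ ∃ c ∈ T, G.Adj x c := by
  obtain ⟨t, ht⟩ : T.Nonempty := Finset.card_pos.1 (by omega)
  obtain ⟨x, hx, hxi, htx | ⟨c, hc, hci, htc, hcx⟩⟩ := h.dom (hT.out t ht) (hi t ht)
  · exact ⟨x, hx, hxi, t, ht, htx.symm⟩
  · by_contra hcon
    have nx : ∀ t ∈ T, ¬ G.Adj x t := fun t ht e => hcon ⟨x, hx, hxi, t, ht, e⟩
    have hcT : c ∉ T := fun e => nx c e hcx.symm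
    obtain ⟨t', ht', hne, -⟩ := exists_other h3 t t
    exact h.no_p4 hx hc (hT.out t ht) (hT.out t' ht') hxi hci (hi t ht) (hi t' ht') hcx.symm
      htc.symm (hT.adj t ht t' ht' hne.symm) (nx t ht) (nx t' ht')
      (fun e => hne (hT.uniq c hc hcT t' ht' t ht e htc.symm))

/-- A maximal clique `T` of `G - K` avoids at most one of the five neighbourhoods. If it avoids two,
both are joined to `T` through the same vertex `c`, and no other vertex of `T` has outer neighbours
off `T`. -/
theorem line_hits (h : Config G k) {T : Finset V} (hT : Line G k T) (h3 : 3 ≤ T.card)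
    {i i' : Fin 5} (hii : i ≠ i') (hi : ∀ t ∈ T, ¬ G.Adj t (k i))
    (hi' : ∀ t ∈ T, ¬ G.Adj t (k i')) : False := by
  obtain ⟨x, hx, hxi, c, hc, hxc⟩ := h.touch hT h3 hi
  obtain ⟨x', hx', hxi', c', hc', hxc'⟩ := h.touch hT h3 hi'
  have hxT : x ∉ T := fun e => hi x e hxi
  have hxT' : x' ∉ T := fun e => hi' x' e hxi'
  have hcc : c = c' := by
    by_contra hne
    obtain ⟨s, hs, hsc, hsc'⟩ := exists_other h3 c c'
    exact h.pendant hT hx' hxi' hxT' hc' hxc' (hi' c' hc') hc (hi' c hc) hne hs (hi' s hs) hsc'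
      hsc.symm hx hxT (fun e => hii (h.kuniq hx hxi e)) hxc.symm
  subst hcc
  obtain ⟨s, hs, hsc, -⟩ := exists_other h3 c c
  obtain ⟨s', hs', hsc', hss⟩ := exists_other h3 c s
  have key : ∀ s ∈ T, s ≠ c → ∀ s' ∈ T, s' ≠ c → s' ≠ s →
      ∀ u, Out k u → G.Adj s u → u ∈ T := by
    intro s hs hsc s' hs' hsc' hss u hu hsu
    by_contra huT
    by_cases hui : G.Adj u (k i)
    · exact h.pendant hT hx' hxi' hxT' hc hxc' (hi' c hc) hs (hi' s hs) hsc hs' (hi' s' hs') hsc'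
        hss.symm hu huT (fun e => hii (h.kuniq hu hui e)) hsu
    · exact h.pendant hT hx hxi hxT hc hxc (hi c hc) hs (hi s hs) hsc hs' (hi s' hs') hsc'
        hss.symm hu huT hui hsu
  exact h.no_two_free hT hs hs' hss.symm (key s hs hsc s' hs' hsc' hss)
    (key s' hs' hsc' s hs hsc hss.symm)

/-- A triangle outside `K` has at most one vertex adjacent to `k j`: otherwise it would extend to a
clique all of whose vertices are adjacent to `k j`, hence to no other vertex of `K`. -/
theorem triangle_index (h : Config G k) {a b c : V} {j : Fin 5} (ha : Out k a) (hb : Out k b)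
    (hc : Out k c) (hab : G.Adj a b) (hac : G.Adj a c) (hbc : G.Adj b c) (haj : G.Adj a (k j))
    (hbj : G.Adj b (k j)) : False := by
  obtain ⟨T, hT, h3, haT, hbT, -⟩ := h.exists_line_of_triangle ha hb hc hab hac hbc
  have hall : ∀ t ∈ T, G.Adj t (k j) := fun t ht => by
    by_cases h1 : t = a
    · exact h1 ▸ haj
    by_cases h2 : t = b
    · exact h2 ▸ hbj
    exact h.dia a b t (k j) hab (hT.adj a haT t ht (Ne.symm h1)) (hT.adj b hbT t ht (Ne.symm h2))
      haj hbj (hT.out t ht j)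
  have hnot : ∀ m, m ≠ j → ∀ t ∈ T, ¬ G.Adj t (k m) :=
    fun m hm t ht e => hm (h.kuniq (hT.out t ht) e (hall t ht))
  obtain ⟨i, i', h1, h2, h3'⟩ : ∃ i i' : Fin 5, i ≠ j ∧ i' ≠ j ∧ i ≠ i' := by
    clear * -
    revert j
    decide
  exact h.line_hits hT h3 h3' (hnot i h1) (hnot i' h2)

/-! ### Triangles of `G - K` -/

/-- The case of `line_step` in which not only `x` is adjacent to `c` but also some further `x'` to
`s`: then `c`, `s` and `s'` have no outer neighbours off `T` except in the
neighbourhood of `k i`, which forces the degree of `x` down to 3. -/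
theorem line_step_aux (h : Config G k) {T : Finset V} (hT : Line G k T) {i j j' : Fin 5}
    {x x' c s s' : V} (hjj : j ≠ j') (hij : i ≠ j) (hij' : i ≠ j') (hs : s ∈ T) (hs' : s' ∈ T)
    (hc : c ∈ T) (hsj : G.Adj s (k j)) (hsj' : G.Adj s' (k j')) (hcj : ¬ G.Adj c (k j))
    (hcj' : ¬ G.Adj c (k j')) (hci : ¬ G.Adj c (k i)) (hx : Out k x) (hxi : G.Adj x (k i))
    (hxT : x ∉ T) (hxc : G.Adj x c) (hx' : Out k x') (hxi' : G.Adj x' (k i)) (hxT' : x' ∉ T)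
    (hxs : G.Adj x' s) : False := by
  classical
  have hsc : s ≠ c := fun e => hcj (e ▸ hsj)
  have hsc' : s' ≠ c := fun e => hcj' (e ▸ hsj')
  have hss : s ≠ s' := fun e => hjj (h.kuniq (hT.out s hs) hsj (e ▸ hsj'))
  have hsi : ¬ G.Adj s (k i) := fun e => hij (h.kuniq (hT.out s hs) e hsj)
  have hsi' : ¬ G.Adj s' (k i) := fun e => hij' (h.kuniq (hT.out s' hs') e hsj')
  have nx : ∀ t ∈ T, t ≠ c → ¬ G.Adj t x :=
    fun t ht htc e => htc (hT.uniq x hx hxT t ht c hc e.symm hxc)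
  have hxm : ∀ m, i ≠ m → ¬ G.Adj x (k m) := fun m hm e => hm (h.kuniq hx hxi e)
  -- Outside the neighbourhood of `k i`, the only outer neighbour of `x` is `c`.
  have hw : ∀ w, Out k w → G.Adj x w → ¬ G.Adj w (k i) → w = c := by
    intro w hwo hxw hwi
    by_contra hwc
    have hwT : w ∉ T := fun e => nx w e hwc hxw.symm
    have ncw := h.pendant hT hx' hxi' hxT' hs hxs hsi hc hci hsc.symm hs' hsi' hss.symm hsc'.symm
      hwo hwT hwi
    have nsw := h.pendant hT hx hxi hxT hc hxc hci hs hsi hsc hs' hsi' hsc' hss hwo hwT hwi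
    have nsw' := h.pendant hT hx hxi hxT hc hxc hci hs' hsi' hsc' hs hsi hsc hss.symm hwo hwT hwi
    by_cases hwj : G.Adj w (k j)
    · exact h.no_p4 (hT.out s' hs') (hT.out c hc) hx hwo hsj' hcj' (hxm j' hij')
        (fun e => hjj (h.kuniq hwo hwj e)) (hT.adj s' hs' c hc hsc') hxc.symm hxw
        (nx s' hs' hsc') nsw' ncw
    · exact h.no_p4 (hT.out s hs) (hT.out c hc) hx hwo hsj hcj (hxm j hij) hwj
        (hT.adj s hs c hc hsc) hxc.symm hxw (nx s hs hsc) nsw ncw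
  -- Inside that neighbourhood, `x` has at most one neighbour.
  have hy : ∀ y y', Out k y → Out k y' → G.Adj x y → G.Adj x y' → G.Adj y (k i) →
      G.Adj y' (k i) → y = y' := by
    intro y y' hyo hyo' hxy hxy' hyi hyi'
    by_contra hne
    have hyy := h.dia (k i) x y y' hxi.symm hyi.symm hxy hyi'.symm hxy' hne
    exact h.triangle_index hx hyo hyo' hxy hxy' hyy hxi hyi
  by_cases hex : ∃ y, Out k y ∧ G.Adj x y ∧ G.Adj y (k i)
  · obtain ⟨y, hyo, hxy, hyi⟩ := hex
    refine h.deg_out hx {c, y} (fun u hu hxu => ?_) (Finset.card_le_two.trans (by omega))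
    by_cases hui : G.Adj u (k i)
    · simp [hy u y hu hyo hxu hxy hui hyi]
    · simp [hw u hu hxu hui]
  · refine h.deg_out hx {c} (fun u hu hxu => ?_) (by simp)
    by_cases hui : G.Adj u (k i)
    · exact absurd ⟨u, hu, hxu, hui⟩ hex
    · simp [hw u hu hxu hui]

/-- An outer neighbour `x` of `k i` off `T` is adjacent to no vertex `c` of `T` outside the
neighbourhood of `k i`. As `T` meets at least four neighbourhoods, it has two further vertices `s`,
`s'` outside that of `k i`, and by `no_two_free` one of them has an outer neighbour off `T`, which
by `pendant` is adjacent to `k i`. -/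
theorem line_step (h : Config G k) {T : Finset V} (hT : Line G k T) (h3 : 3 ≤ T.card) {i : Fin 5}
    {x c : V} (hx : Out k x) (hxi : G.Adj x (k i)) (hxT : x ∉ T) (hc : c ∈ T)
    (hci : ¬ G.Adj c (k i)) : ¬ G.Adj x c := by
  intro hxc
  obtain ⟨m, hm⟩ : ∃ m, ∀ j, j ≠ m → ∃ t ∈ T, G.Adj t (k j) := by
    by_cases hex : ∃ m, ∀ t ∈ T, ¬ G.Adj t (k m)
    · obtain ⟨m, hm⟩ := hex
      refine ⟨m, fun j hj => ?_⟩
      by_contra hcon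
      push Not at hcon
      exact h.line_hits hT h3 hj hcon hm
    · push Not at hex
      exact ⟨0, fun j _ => hex j⟩
  obtain ⟨p, hp⟩ := h.exists_index (hT.out c hc)
  -- Two of the five indices differ from `i`, from that of `c` and from the one that `T` may avoid.
  obtain ⟨j, j', hjj, hij, hij', hjm, hjm', hjp, hjp'⟩ : ∃ j j' : Fin 5, j ≠ j' ∧ i ≠ j ∧ i ≠ j' ∧
      j ≠ m ∧ j' ≠ m ∧ j ≠ p ∧ j' ≠ p := by
    clear * -
    revert i m p
    decide
  obtain ⟨s, hs, hsj⟩ := hm j hjm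
  obtain ⟨s', hs', hsj'⟩ := hm j' hjm'
  have hcj : ¬ G.Adj c (k j) := fun e => hjp (hp j e)
  have hcj' : ¬ G.Adj c (k j') := fun e => hjp' (hp j' e)
  have hsc : s ≠ c := fun e => hcj (e ▸ hsj)
  have hsc' : s' ≠ c := fun e => hcj' (e ▸ hsj')
  have hss : s ≠ s' := fun e => hjj (h.kuniq (hT.out s hs) hsj (e ▸ hsj'))
  have hsi : ¬ G.Adj s (k i) := fun e => hij (h.kuniq (hT.out s hs) e hsj)
  have hsi' : ¬ G.Adj s' (k i) := fun e => hij' (h.kuniq (hT.out s' hs') e hsj')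
  refine h.no_two_free hT hs hs' hss (fun u hu hsu => ?_) (fun u hu hsu => ?_)
  · by_contra huT
    by_cases hui : G.Adj u (k i)
    · exact h.line_step_aux hT hjj hij hij' hs hs' hc hsj hsj' hcj hcj' hci hx hxi hxT hxc hu hui
        huT hsu.symm
    · exact h.pendant hT hx hxi hxT hc hxc hci hs hsi hsc hs' hsi' hsc' hss hu huT hui hsu
  · by_contra huT
    by_cases hui : G.Adj u (k i)
    · exact h.line_step_aux hT hjj.symm hij' hij hs' hs hc hsj' hsj hcj' hcj hci hx hxi hxT hxc hu
        hui huT hsu.symm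
    · exact h.pendant hT hx hxi hxT hc hxc hci hs' hsi' hsc' hs hsi hsc hss.symm hu huT hui hsu

theorem line_hits_all (h : Config G k) {T : Finset V} (hT : Line G k T) (h3 : 3 ≤ T.card)
    (i : Fin 5) : ∃ t ∈ T, G.Adj t (k i) := by
  by_contra hcon
  push Not at hcon
  obtain ⟨x, hx, hxi, c, hc, hxc⟩ := h.touch hT h3 hcon
  exact h.line_step hT h3 hx hxi (fun e => hcon x e hxi) hc (hcon c hc) hxc

/-- Since `T` has at most five vertices and meets all five neighbourhoods, each of its vertices
lies in one of them. -/
theorem line_index (h : Config G k) {T : Finset V} (hT : Line G k T) (h3 : 3 ≤ T.card) {v : V}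
    (hv : v ∈ T) : ∃ i, G.Adj v (k i) := by
  classical
  by_contra hcon
  choose t htT ht using h.line_hits_all hT h3
  have hinj : Function.Injective t := fun i j hij =>
    h.kuniq (hT.out _ (htT i)) (ht i) (hij ▸ ht j)
  have h1 : (Finset.univ.image t) ⊆ T.erase v := by
    intro y hy
    obtain ⟨i, -, rfl⟩ := Finset.mem_image.1 hy
    exact Finset.mem_erase.2 ⟨fun e => hcon ⟨i, e ▸ ht i⟩, htT i⟩
  have h2 := Finset.card_le_card h1
  rw [Finset.card_image_of_injective _ hinj, Finset.card_erase_of_mem hv] at h2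
  have h5 := h.k6 T (fun a ha b hb hab => hT.adj a ha b hb hab)
  simp at h2
  omega

/-- A vertex of `T` has no outer neighbour `u` off `T`: such a `u` would have no further outer
neighbours, hence degree at most 2. -/
theorem line_closed (h : Config G k) {T : Finset V} (hT : Line G k T) (h3 : 3 ≤ T.card) {v : V}
    (hv : v ∈ T) {u : V} (hu : Out k u) (hvu : G.Adj v u) : u ∈ T := by
  by_contra huT
  obtain ⟨i, hvi⟩ := h.line_index hT h3 hv
  have hvj : ∀ j, j ≠ i → ¬ G.Adj v (k j) := fun j hj e => hj (h.kuniq (hT.out v hv) e hvi)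
  have huj : ∀ j, j ≠ i → ¬ G.Adj u (k j) :=
    fun j hj e => h.line_step hT h3 hu e huT hv (hvj j hj) hvu.symm
  refine h.deg_out hu {v} (fun w hw huw => ?_) (by simp)
  by_contra hwv
  rw [Finset.mem_singleton] at hwv
  have hwT : w ∉ T := fun e => hwv (hT.uniq u hu huT w e v hv huw hvu.symm)
  have hvw : ¬ G.Adj v w := by
    intro hvw
    obtain ⟨T', hT', h3', -, huT', -⟩ := h.exists_line_of_triangle (hT.out v hv) hu hw hvu hvw huw
    obtain ⟨j, hj⟩ := h.line_index hT' h3' huT'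
    by_cases hji : j = i
    · subst hji
      exact h.triangle_index (hT.out v hv) hu hw hvu hvw huw hvi hj
    · exact huj j hji hj
  obtain ⟨p, hp⟩ := h.exists_index hw
  have main : ∀ j, j ≠ i → j ≠ p → ∀ t ∈ T, G.Adj t (k j) → G.Adj w t := by
    intro j hji hjp t ht htj
    by_contra hwt
    have htv : t ≠ v := fun e => hvj j hji (e ▸ htj)
    exact h.no_p4 (hT.out t ht) (hT.out v hv) hu hw htj (hvj j hji) (huj j hji)
      (fun e => hjp (hp j e)) (hT.adj t ht v hv htv) hvu huw
      (fun e => htv (hT.uniq u hu huT t ht v hv e.symm hvu.symm)) (fun e => hwt e.symm) hvw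
  -- `w` would then be adjacent to two vertices of `T`.
  obtain ⟨j, j', hjj, h1, h2, h1', h2'⟩ : ∃ j j' : Fin 5, j ≠ j' ∧ j ≠ i ∧ j ≠ p ∧ j' ≠ i ∧
      j' ≠ p := by
    clear * -
    revert i p
    decide
  obtain ⟨t, ht, htj⟩ := h.line_hits_all hT h3 j
  obtain ⟨t', ht', htj'⟩ := h.line_hits_all hT h3 j'
  have htt := hT.uniq w hw hwT t ht t' ht' (main j h1 h2 t ht htj) (main j' h1' h2' t' ht' htj')
  exact hjj (h.kuniq (hT.out t ht) htj (htt ▸ htj'))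

theorem no_triangle (h : Config G k) {a b c : V} (ha : Out k a) (hb : Out k b)
    (hc : Out k c) (hab : G.Adj a b) (hac : G.Adj a c) (hbc : G.Adj b c) : False := by
  obtain ⟨T, hT, h3, haT, hbT, -⟩ := h.exists_line_of_triangle ha hb hc hab hac hbc
  exact h.no_two_free hT haT hbT hab.ne (fun u hu e => h.line_closed hT h3 haT hu e)
    (fun u hu e => h.line_closed hT h3 hbT hu e)

/-! ### Colouring when `G - K` is triangle-free -/

/-- The graph induced outside `K` and the neighbourhood of `k 0` is bipartite. By `dom` and
`no_p4`, each of its components lies within distance 2 of a neighbour `x` of `k 0`, and the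
neighbours of `x` form one side of it. -/
theorem bipartite (h : Config G k) : ∃ side : V → Prop, ∀ u v, Out k u → Out k v →
    ¬ G.Adj u (k 0) → ¬ G.Adj v (k 0) → G.Adj u v → (side u ↔ ¬ side v) := by
  let H : V → Prop := fun v => Out k v ∧ ¬ G.Adj v (k 0)
  let D : V → V → Prop := fun x v => G.Adj v x ∨ ∃ c, H c ∧ G.Adj v c ∧ G.Adj c x
  let r : V → V → Prop := fun u v => H u ∧ H v ∧ G.Adj u v
  have hr : ∀ u v, r u v → r v u := fun u v e => ⟨e.2.1, e.1, e.2.2.symm⟩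
  have step : ∀ x, Out k x → G.Adj x (k 0) → ∀ u v, r u v → D x u → D x v := by
    rintro x hx hx0 u v ⟨hu, hv, huv⟩ (hux | ⟨c, hc, huc, hcx⟩)
    · exact Or.inr ⟨u, hu, huv.symm, hux⟩
    · by_contra hD
      refine h.no_p4 hx hc.1 hu.1 hv.1 hx0 hc.2 hu.2 hv.2 hcx.symm huc.symm huv ?_ ?_ ?_
      · exact fun e => hD (Or.inr ⟨u, hu, huv.symm, e.symm⟩)
      · exact fun e => hD (Or.inl e.symm)
      · exact fun e => hD (Or.inr ⟨c, hc, e.symm, hcx⟩)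
  have inv : ∀ u v, Relation.EqvGen r u v → (H u ↔ H v) ∧
      ∀ x, Out k x → G.Adj x (k 0) → (D x u ↔ D x v) := by
    intro u v e
    induction e with
    | rel u v e =>
      exact ⟨⟨fun _ => e.2.1, fun _ => e.1⟩, fun x hx hx0 =>
        ⟨step x hx hx0 u v e, step x hx hx0 v u (hr u v e)⟩⟩
    | refl u => exact ⟨Iff.rfl, fun _ _ _ => Iff.rfl⟩
    | symm u v _ ih => exact ⟨ih.1.symm, fun x hx hx0 => (ih.2 x hx hx0).symm⟩
    | trans u v w _ _ ih1 ih2 =>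
      exact ⟨ih1.1.trans ih2.1, fun x hx hx0 => (ih1.2 x hx hx0).trans (ih2.2 x hx hx0)⟩
  have hX : ∀ q : Quot r, ∃ x, Out k x ∧ G.Adj x (k 0) ∧ ∀ v, Quot.mk r v = q → H v → D x v := by
    intro q
    obtain ⟨a, rfl⟩ := Quot.exists_rep q
    by_cases ha : H a
    · obtain ⟨x, hx, hx0, hd⟩ := h.dom ha.1 ha.2
      have hDa : D x a := by
        rcases hd with hd | ⟨c, hc, hc0, h1, h2⟩
        · exact Or.inl hd
        · exact Or.inr ⟨c, ⟨hc, hc0⟩, h1, h2⟩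
      exact ⟨x, hx, hx0, fun v e _ => ((inv v a (Quot.eqvGen_exact e)).2 x hx hx0).2 hDa⟩
    · obtain ⟨x, hx, hx0⟩ := h.exists_nbr 0
      exact ⟨x, hx, hx0, fun v e hv => absurd ((inv v a (Quot.eqvGen_exact e)).1.1 hv) ha⟩
  choose X hXo hX0 hXD using hX
  refine ⟨fun v => G.Adj v (X (Quot.mk r v)), fun u v hu hv hu0 hv0 huv => ?_⟩
  have hq : Quot.mk r u = Quot.mk r v := Quot.sound ⟨⟨hu, hu0⟩, ⟨hv, hv0⟩, huv⟩
  have hDu := hXD _ u hq ⟨hu, hu0⟩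
  have hx := hXo (Quot.mk r v)
  have hx0 := hX0 (Quot.mk r v)
  simp only [hq]
  generalize X (Quot.mk r v) = x at *
  refine ⟨fun hux hvx => h.no_triangle hu hv hx huv hux hvx, fun hvx => ?_⟩
  rcases hDu with hux | ⟨c, hc, huc, hcx⟩
  · exact hux
  · by_contra hux
    exact h.no_p4 hx hc.1 hu hv hx0 hc.2 hu0 hv0 hcx.symm huc.symm huv (fun e => hux e.symm)
      (fun e => hvx e.symm) (fun e => h.no_triangle hc.1 hu hv huc.symm e huv)

/-- The vertex `k i` gets colour `i`. The neighbours of `k 0` induce a matching and get colours 3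
and 4, the second for the end of an edge that is larger in the order given by `e`. The remaining
vertices are split into two sides; one gets colour 0, the other colour 1, replaced by 2 at the
neighbours of `k 1`. -/
theorem contradiction (h : Config G k) (e : V → ℕ) (he : Function.Injective e) : False := by
  classical
  obtain ⟨side, hside⟩ := h.bipartite
  let big : V → Prop := fun v => ∃ u, Out k u ∧ G.Adj u (k 0) ∧ G.Adj v u ∧ e u < e v
  let g : V → Fin 5 := fun v => if G.Adj v (k 0) then (if big v then 4 else 3)
    else if side v then 0 else if G.Adj v (k 1) then 2 else 1
  let f : V → Fin 5 := fun v => if hv : ∃ i, v = k i then hv.choose else g v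
  have fk : ∀ i, f (k i) = i := by
    intro i
    have hv : ∃ j, k i = k j := ⟨i, rfl⟩
    simp only [f, dif_pos hv]
    exact h.kinj hv.choose_spec.symm
  have fo : ∀ v, Out k v → f v = g v := by
    intro v hv
    simp only [f]
    rw [dif_neg (by simpa [Out] using hv)]
  have hkv : ∀ i v, Out k v → G.Adj v (k i) → i ≠ g v := by
    intro i v hv hvi
    have hu : ∀ j, G.Adj v (k j) → i = j := fun j hj => h.kuniq hv hvi hj
    simp only [g]
    split_ifs with h1 h2 h3 h4
    · rw [hu 0 h1]; decide
    · rw [hu 0 h1]; decide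
    · rintro rfl; exact h1 hvi
    · rw [hu 1 h4]; decide
    · rintro rfl; exact h4 hvi
  have matching : ∀ u v w, Out k u → Out k v → Out k w → G.Adj u (k 0) → G.Adj v (k 0) →
      G.Adj w (k 0) → G.Adj u v → G.Adj u w → v = w := by
    intro u v w hu hv hw hu0 hv0 hw0 huv huw
    by_contra hne
    exact h.no_triangle hu hv hw huv huw
      (h.dia (k 0) u v w hu0.symm hv0.symm huv hw0.symm huw hne)
  have hbig : ∀ u v, Out k u → Out k v → G.Adj u (k 0) → G.Adj v (k 0) → G.Adj u v →
      e u < e v → big v ∧ ¬ big u := by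
    intro u v hu hv hu0 hv0 huv hlt
    refine ⟨⟨u, hu, hu0, huv.symm, hlt⟩, ?_⟩
    rintro ⟨w, hw, hw0, huw, hwu⟩
    rw [matching u v w hu hv hw hu0 hv0 hw0 huv huw] at hlt
    omega
  have hgg : ∀ u v, Out k u → Out k v → G.Adj u v → g u ≠ g v := by
    intro u v hu hv huv
    by_cases hu0 : G.Adj u (k 0) <;> by_cases hv0 : G.Adj v (k 0)
    · simp only [g, hu0, hv0, if_true]
      rcases lt_trichotomy (e u) (e v) with hlt | heq | hlt
      · obtain ⟨h1, h2⟩ := hbig u v hu hv hu0 hv0 huv hlt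
        simp [h1, h2]
      · exact absurd (he heq) huv.ne
      · obtain ⟨h1, h2⟩ := hbig v u hv hu hv0 hu0 huv.symm hlt
        simp [h1, h2]
    · simp only [g, hu0, hv0, if_true, if_false]
      split_ifs <;> decide
    · simp only [g, hu0, hv0, if_true, if_false]
      split_ifs <;> decide
    · have hs := hside u v hu hv hu0 hv0 huv
      simp only [g, hu0, hv0, if_false]
      by_cases h1 : side u
      · simp only [h1, hs.1 h1, if_true, if_false]
        split_ifs <;> decide
      · have h2 : side v := by
          by_contra h2
          exact h1 (hs.2 h2)
        simp only [h1, h2, if_true, if_false]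
        split_ifs <;> decide
  refine h.ncol ⟨f, fun u v huv => ?_⟩
  by_cases hu : Out k u <;> by_cases hv : Out k v
  · rw [fo u hu, fo v hv]
    exact hgg u v hu hv huv
  · obtain ⟨i, rfl⟩ : ∃ i, v = k i := by simpa [Out] using hv
    rw [fo u hu, fk]
    exact (hkv i u hu huv).symm
  · obtain ⟨i, rfl⟩ : ∃ i, u = k i := by simpa [Out] using hu
    rw [fo v hv, fk]
    exact hkv i v hv huv.symm
  · obtain ⟨i, rfl⟩ : ∃ i, u = k i := by simpa [Out] using hu
    obtain ⟨j, rfl⟩ : ∃ j, v = k j := by simpa [Out] using hv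
    rw [fk, fk]
    rintro rfl
    exact G.irrefl huv

end Config

end SixCritical

/-- There are no 6-vertex-critical (P₆, diamond)-free graphs with clique number 5. -/
theorem no_six_critical_cliqueNum_five {V : Type*} [Fintype V] (G : SimpleGraph V)
    (hG : P6DiamondFree G) (hclique : G.cliqueNum = 5) :
    ¬ IsVertexCritical 6 G := by
  intro hcrit
  obtain ⟨hchi, hsub⟩ := hcrit
  obtain ⟨K, hK⟩ := G.exists_isNClique_cliqueNum
  rw [hclique] at hK
  let eK : Fin 5 ≃ K := (Fintype.equivFinOfCardEq (by simpa using hK.card_eq)).symm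
  have hconf : SixCritical.Config G (fun i => (eK i : V)) :=
    { p6 := SixCritical.p6_of_free hG.1
      dia := SixCritical.dia_of_free hG.2
      k6 := fun T hT => hclique ▸ hT.card_le_cliqueNum
      kadj := fun i j hij => hK.isClique (eK i).2 (eK j).2
        (fun e => hij (eK.injective (Subtype.ext e)))
      crit := by
        classical
        intro S hS
        have hlt := hsub S hS
        have hcol : (G.induce S).Colorable 5 := by
          rw [← SimpleGraph.chromaticNumber_le_iff_colorable]
          have h6 : ((6 : ℕ) : ℕ∞) = ((5 : ℕ) : ℕ∞) + 1 := by norm_num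
          rw [h6] at hlt
          exact Order.le_of_lt_add_one hlt
        obtain ⟨C⟩ := hcol
        refine ⟨fun v => if hv : v ∈ S then C ⟨v, hv⟩ else 0, fun u hu v hv huv => ?_⟩
        simp only [hu, hv, dif_pos]
        exact C.valid (by simpa using huv)
      ncol := by
        rintro ⟨f, hf⟩
        have hcol : G.Colorable 5 := ⟨SimpleGraph.Coloring.mk f fun {u v} huv => hf u v huv⟩
        have hle := SimpleGraph.chromaticNumber_le_iff_colorable.2 hcol
        rw [hchi] at hle
        exact absurd hle (by decide) }
  exact hconf.contradiction (fun v => (Fintype.equivFin V v : ℕ))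
    (Fin.val_injective.comp (Fintype.equivFin V).injective)
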